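/- Let E be a normal p-subgroup of a finite group G. Then E is contained in the U-hypercentre Z_U(G) (i.e., every chief factor of G below E is cyclic) if and only if the quotient G/C_G(E) satisfies: its smallest normal subgroup with abelian quotient of exponent dividing p−1 is contained in O_p(G/C_G(E)). -/

import Mathlib

/-- `K < N` is a chief factor of `G`: both are normal and there is no normal
subgroup strictly between them. -/
def IsChiefFactor (G : Type*) [Group G] (K N : Subgroup G) : Prop :=
  K.Normal ∧ N.Normal ∧ K < N ∧
    ∀ L : Subgroup G, L.Normal → K ≤ L → L ≤ N → L = K ∨ L = N

/-- The factor `N/K` is cyclic: it is generated by a single coset. -/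
def CyclicFactor {G : Type*} [Group G] (K N : Subgroup G) : Prop :=
  ∃ g ∈ N, ∀ x ∈ N, ∃ n : ℤ, (g ^ n)⁻¹ * x ∈ K

/-- The `𝔘`-hypercentre of `G`: the product of all normal subgroups `N` of `G`
such that all chief factors of `G` below `N` are cyclic. -/
def UHypercentre (G : Type*) [Group G] : Subgroup G :=
  ⨆ N ∈ {N : Subgroup G | N.Normal ∧
      ∀ K L : Subgroup G, IsChiefFactor G K L → L ≤ N → CyclicFactor K L}, N

/-! The modular law shows that a join of `𝔘`-hypercentral normal subgroups is again
`𝔘`-hypercentral, so `E ≤ Z_𝔘(G)` exactly when every chief factor of `G` below `E` is cyclic.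

A chief factor `L/K` below the `p`-group `E` is an irreducible `G`-group, hence elementary abelian,
and it is cyclic iff `G/C_G(L/K)` is abelian of exponent dividing `p - 1`. If it is cyclic, it has
order `p` and its automorphism group is `(ℤ/p)ˣ`. Conversely, each `g` then acts as a linear map
killed by `X ^ p - X`, so it has an eigenvalue in `𝔽_p`; its eigenspace is `G`-invariant, so `g`
acts as a power map, and every subgroup of `L/K` is invariant.

It remains to compare `O_p(G/C_G(E))` with the intersection `D/C_G(E)` of the centralisers of these
chief factors. A normal `p`-subgroup has nontrivial fixed points on each of them, hence acts
trivially; and `D/C_G(E)` is itself a `p`-group, because it stabilises a chief series of `E`. -/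

open scoped commutatorElement
open Polynomial QuotientGroup

section ChiefFactors

variable {G : Type*} [Group G]

theorem sup_inf_assoc_of_le_of_normal {K L : Subgroup G} [K.Normal] (N : Subgroup G)
    (hKL : K ≤ L) : (K ⊔ N) ⊓ L = K ⊔ N ⊓ L :=
  SetLike.coe_injective <| by
    rw [Subgroup.coe_inf, Subgroup.normal_mul, Subgroup.normal_mul,
      Subgroup.mul_inf_assoc _ _ _ hKL]

theorem IsChiefFactor.inf_of_sup {A B : Subgroup G} [B.Normal] (h : IsChiefFactor G A (A ⊔ B)) :
    IsChiefFactor G (A ⊓ B) B := by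
  obtain ⟨hA, -, hlt, hmax⟩ := h
  refine ⟨inferInstance, inferInstance, inf_lt_right.2 (left_lt_sup.1 hlt), fun Y hY hAY hYB => ?_⟩
  have hYeq : (A ⊔ Y) ⊓ B = Y := by
    rw [sup_comm, sup_inf_assoc_of_le_of_normal A hYB, sup_eq_left.2 hAY]
  rcases hmax (A ⊔ Y) inferInstance le_sup_left (sup_le_sup_left hYB A) with hbot | htop
  · exact Or.inl (by rw [← hYeq, hbot])
  · exact Or.inr (by rw [← hYeq, htop, inf_eq_right.2 le_sup_right])

theorem IsChiefFactor.sup_of_inf {A B : Subgroup G} [A.Normal] (h : IsChiefFactor G (A ⊓ B) B) :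
    IsChiefFactor G A (A ⊔ B) := by
  obtain ⟨-, hB, hlt, hmax⟩ := h
  refine ⟨inferInstance, inferInstance, left_lt_sup.2 (inf_lt_right.1 hlt), fun Y hY hAY hYB => ?_⟩
  have hYeq : A ⊔ B ⊓ Y = Y := by
    rw [← sup_inf_assoc_of_le_of_normal B hAY, inf_eq_right.2 hYB]
  rcases hmax (B ⊓ Y) inferInstance (le_inf inf_le_right (inf_le_left.trans hAY)) inf_le_left
    with hbot | htop
  · exact Or.inl (by rw [← hYeq, hbot, sup_inf_self])
  · exact Or.inr (by rw [← hYeq, htop])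

theorem IsChiefFactor.sup_inf_eq {K L N : Subgroup G} [N.Normal] (h : IsChiefFactor G K L)
    (hN : ¬ L ⊓ N ≤ K) : K ⊔ L ⊓ N = L := by
  obtain ⟨_, _, hlt, hmax⟩ := h
  exact (hmax (K ⊔ L ⊓ N) inferInstance le_sup_left (sup_le hlt.le inf_le_left)).resolve_left
    fun heq => hN (heq ▸ le_sup_right)

theorem exists_isChiefFactor {N : Subgroup G} [Finite N] (hN : N.Normal) (hbot : N ≠ ⊥) :
    ∃ K, IsChiefFactor G K N := by
  have hfin : {K : Subgroup G | K.Normal ∧ K < N}.Finite :=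
    (N : Set G).toFinite.finite_subsets.preimage
      SetLike.coe_injective.injOn |>.subset fun K hK => hK.2.le
  obtain ⟨K, hK⟩ := hfin.exists_maximal ⟨⊥, inferInstance, bot_lt_iff_ne_bot.2 hbot⟩
  refine ⟨K, hK.prop.1, hN, hK.prop.2, fun L hL hKL hLN => ?_⟩
  exact hLN.eq_or_lt.symm.imp_left fun hlt => hK.eq_of_ge ⟨hL, hlt⟩ hKL

theorem cyclicFactor_iff_isCyclic {K L : Subgroup G} [K.Normal] :
    CyclicFactor K L ↔ IsCyclic (L.map (mk' K)) := by
  simp [CyclicFactor, ← QuotientGroup.eq, isCyclic_iff_exists_zpowers_eq_top,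
    Subgroup.eq_top_iff', Subgroup.mem_zpowers_iff, Subtype.ext_iff]

theorem cyclicFactor_inf_iff {A B : Subgroup G} : CyclicFactor (A ⊓ B) B ↔ CyclicFactor A B := by
  refine exists_congr fun g => and_congr_right fun hg => forall₂_congr fun x hx =>
    exists_congr fun n => ?_
  exact and_iff_left (B.mul_mem (B.inv_mem (B.zpow_mem hg n)) hx)

theorem cyclicFactor_sup_iff {A B : Subgroup G} [A.Normal] :
    CyclicFactor A (A ⊔ B) ↔ CyclicFactor A B := by
  rw [cyclicFactor_iff_isCyclic, cyclicFactor_iff_isCyclic, Subgroup.map_sup, map_mk'_self,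
    bot_sup_eq]

end ChiefFactors

section UHypercentre

variable {G : Type*} [Group G]

/-- `N` is `𝔘`-hypercentral in `G`: it is one of the normal subgroups whose product is
`UHypercentre G`. The predicate lets closure under joins be stated. -/
def IsUHypercentral (N : Subgroup G) : Prop :=
  N.Normal ∧ ∀ K L : Subgroup G, IsChiefFactor G K L → L ≤ N → CyclicFactor K L

theorem IsUHypercentral.cyclicFactor_of_not_inf_le {K L N : Subgroup G} (hN : IsUHypercentral N)
    (h : IsChiefFactor G K L) (hLN : ¬ L ⊓ N ≤ K) : CyclicFactor K L := by
  have := hN.1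
  have := h.1
  have := h.2.1
  have hL : K ⊔ L ⊓ N = L := h.sup_inf_eq hLN
  have hchief : IsChiefFactor G (K ⊓ (L ⊓ N)) (L ⊓ N) :=
    IsChiefFactor.inf_of_sup (hL.symm ▸ h)
  have hcyc := hN.2 _ _ hchief inf_le_right
  rwa [cyclicFactor_inf_iff, ← cyclicFactor_sup_iff, hL] at hcyc

theorem isUHypercentral_bot : IsUHypercentral (⊥ : Subgroup G) :=
  ⟨inferInstance, fun _ _ h hL => absurd (h.2.2.1.trans_le hL) not_lt_bot⟩

theorem IsUHypercentral.sup {M N : Subgroup G} (hM : IsUHypercentral M)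
    (hN : IsUHypercentral N) : IsUHypercentral (M ⊔ N) := by
  have := hM.1
  have := hN.1
  refine ⟨inferInstance, fun K L h hL => ?_⟩
  -- Either `L/K` is isomorphic to a factor below `M`, or it is isomorphic to the factor `LM/KM`,
  -- which in turn is isomorphic to one below `N`.
  by_cases hLM : L ⊓ M ≤ K
  · obtain ⟨_, _, hKL, -⟩ := id h
    have hinf : (K ⊔ M) ⊓ L = K := by
      rw [sup_inf_assoc_of_le_of_normal M hKL.le, inf_comm, sup_eq_left.2 hLM]
    have hchief : IsChiefFactor G (K ⊔ M) (K ⊔ M ⊔ L) :=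
      IsChiefFactor.sup_of_inf (hinf.symm ▸ h)
    have hNK : ¬ (K ⊔ M ⊔ L) ⊓ N ≤ K ⊔ M := by
      intro hle
      have hmod : (M ⊔ N) ⊓ (K ⊔ M ⊔ L) = M ⊔ N ⊓ (K ⊔ M ⊔ L) :=
        sup_inf_assoc_of_le_of_normal N (le_sup_right.trans le_sup_left)
      rw [inf_eq_right.2 (sup_le (sup_le (hKL.le.trans hL) le_sup_left) hL), inf_comm] at hmod
      exact hchief.2.2.1.not_ge (hmod.le.trans (sup_le le_sup_right hle))
    have hcyc := hN.cyclicFactor_of_not_inf_le hchief hNK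
    rwa [cyclicFactor_sup_iff, ← cyclicFactor_inf_iff, hinf] at hcyc
  · exact hM.cyclicFactor_of_not_inf_le h hLM

theorem exists_isUHypercentral_mem {x : G} (hx : x ∈ UHypercentre G) :
    ∃ N : Subgroup G, IsUHypercentral N ∧ x ∈ N := by
  have hdir : DirectedOn (· ≤ ·) {N : Subgroup G | IsUHypercentral N} := fun M hM N hN =>
    ⟨M ⊔ N, hM.sup hN, le_sup_left, le_sup_right⟩
  rw [UHypercentre, ← sSup_eq_iSup] at hx
  exact (Subgroup.mem_sSup_of_directedOn ⟨⊥, isUHypercentral_bot⟩ hdir).1 hx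

theorem le_uHypercentre_iff {E : Subgroup G} (hE : E.Normal) :
    E ≤ UHypercentre G ↔
      ∀ K L : Subgroup G, IsChiefFactor G K L → L ≤ E → CyclicFactor K L := by
  refine ⟨fun hEU K L h hL => ?_, fun h =>
    le_iSup₂_of_le (f := fun (N : Subgroup G) _ => N) E ⟨hE, h⟩ le_rfl⟩
  obtain ⟨x, hxL, hxK⟩ := SetLike.exists_of_lt h.2.2.1
  obtain ⟨N, hN, hxN⟩ := exists_isUHypercentral_mem (hEU (hL hxL))
  exact hN.cyclicFactor_of_not_inf_le h fun hle => hxK (hle ⟨hxL, hxN⟩)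

end UHypercentre

section Eigenvalues

theorem exists_hasEigenvalue_of_splits {K V : Type*} [Field K] [AddCommGroup V] [Module K V]
    [Module.Finite K V] [Nontrivial V] {f : Module.End K V} {q : K[X]} (hq : q ≠ 0)
    (hsplits : q.Splits) (hf : aeval f q = 0) : ∃ μ, f.HasEigenvalue μ := by
  obtain ⟨μ, hμ⟩ := (hsplits.of_dvd hq (minpoly.dvd K f hf)).exists_eval_eq_zero
    (minpoly.degree_pos (Algebra.IsIntegral.isIntegral f)).ne'
  exact ⟨μ, Module.End.hasEigenvalue_of_isRoot hμ⟩

theorem exists_apply_eq_nsmul_of_pow_prime_eq_self {p : ℕ} [Fact p.Prime] {A : Type*}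
    [AddCommGroup A] [Module (ZMod p) A] [Module.Finite (ZMod p) A] [Nontrivial A]
    {f : AddMonoid.End A} (hf : f ^ p = f) : ∃ k : ℕ, ∃ a ≠ 0, f a = k • a := by
  let T : Module.End (ZMod p) A := AddMonoidHom.toZModLinearMap p f
  have hT : T ^ p = T := LinearMap.ext fun a => by
    rw [Module.End.pow_apply]
    exact congr($hf a)
  obtain ⟨μ, hμ⟩ := exists_hasEigenvalue_of_splits
    (FiniteField.X_pow_card_sub_X_ne_zero (ZMod p) (Fact.out : p.Prime).one_lt)
    (GaloisField.splits_zmod_X_pow_sub_X p)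
    (by rw [map_sub, map_pow, aeval_X, hT, sub_self] : aeval T (X ^ p - X) = 0)
  obtain ⟨a, ha⟩ := hμ.exists_hasEigenvector
  refine ⟨μ.val, a, ha.2, ha.apply_eq_smul.trans ?_⟩
  rw [← Nat.cast_smul_eq_nsmul (ZMod p), ZMod.natCast_zmod_val]

theorem exists_apply_eq_pow_of_pow_prime_eq_self {V : Type*} [CommGroup V] [Finite V]
    [Nontrivial V] {p : ℕ} [Fact p.Prime] (hexp : ∀ v : V, v ^ p = 1) {f : Monoid.End V}
    (hf : f ^ p = f) : ∃ k : ℕ, ∃ v ≠ 1, f v = v ^ k :=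
  have : Module (ZMod p) (Additive V) := AddCommGroup.zmodModule fun v => hexp v.toMul
  exists_apply_eq_nsmul_of_pow_prime_eq_self (p := p) (A := Additive V)
    (f := MonoidHom.toAdditive f) (congrArg MonoidHom.toAdditive hf)

end Eigenvalues

section Irreducible

open scoped IsMulCommutative

variable {G V : Type*} [Group G] [Group V] {φ : G →* MulAut V} {p : ℕ}

/-- The action `φ` of `G` on the group `V` by automorphisms is irreducible: `V` is nontrivial and
has no `G`-invariant subgroup other than `⊥` and `⊤`. Chief factors of `G` are the instances of
interest; `V` need not be abelian a priori, so this is not a statement about modules. -/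
structure IsIrreducibleAction (φ : G →* MulAut V) : Prop where
  nontrivial : Nontrivial V
  eq_bot_or_eq_top : ∀ W : Subgroup V, (∀ g, ∀ w ∈ W, φ g w ∈ W) → W = ⊥ ∨ W = ⊤

namespace IsIrreducibleAction

theorem mem_of_invariant (h : IsIrreducibleAction φ) {W : Subgroup V}
    (hW : ∀ g, ∀ w ∈ W, φ g w ∈ W) {w : V} (hw : w ∈ W) (hw1 : w ≠ 1) (v : V) : v ∈ W := by
  rcases h.eq_bot_or_eq_top W hW with rfl | rfl
  · exact absurd hw hw1
  · exact Subgroup.mem_top v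

theorem isMulCommutative [Finite V] [Fact p.Prime] (h : IsIrreducibleAction φ)
    (hV : IsPGroup p V) : IsMulCommutative V := by
  have := h.nontrivial
  obtain ⟨z, hz, hz1⟩ := (Subgroup.nontrivial_iff_exists_ne_one _).1 hV.center_nontrivial
  have hinv : ∀ g, ∀ w ∈ Subgroup.center V, φ g w ∈ Subgroup.center V := fun g _ hw =>
    Subgroup.characteristic_iff_le_comap.1 inferInstance (φ g) hw
  exact Subgroup.center_eq_top_iff.1 ((Subgroup.eq_top_iff' _).2 (h.mem_of_invariant hinv hz hz1))

theorem prime_dvd_card [Finite V] [Fact p.Prime] (h : IsIrreducibleAction φ) (hV : IsPGroup p V) :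
    p ∣ Nat.card V :=
  have := h.nontrivial
  hV.card_eq_or_dvd.resolve_left Finite.one_lt_card.ne'

theorem pow_eq_one [Finite V] [Fact p.Prime] (h : IsIrreducibleAction φ) (hV : IsPGroup p V)
    (v : V) : v ^ p = 1 := by
  have := h.isMulCommutative hV
  obtain ⟨x, hx⟩ := exists_prime_orderOf_dvd_card' p (h.prime_dvd_card hV)
  have hx1 : x ≠ 1 := by
    rintro rfl
    exact (Fact.out : p.Prime).ne_one (by rw [← hx, orderOf_one])
  have hxp : x ∈ (powMonoidHom p : V →* V).ker := by
    rw [MonoidHom.mem_ker, powMonoidHom_apply, ← hx, pow_orderOf_eq_one]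
  refine h.mem_of_invariant (W := (powMonoidHom p : V →* V).ker) (fun g w hw => ?_) hxp hx1 v
  rw [MonoidHom.mem_ker, powMonoidHom_apply] at hw ⊢
  rw [← map_pow, hw, map_one]

theorem card_eq_prime [Finite V] [Fact p.Prime] [IsCyclic V] (h : IsIrreducibleAction φ)
    (hV : IsPGroup p V) : Nat.card V = p := by
  refine Nat.dvd_antisymm ?_ (h.prime_dvd_card hV)
  rw [← IsCyclic.exponent_eq_card]
  exact Monoid.exponent_dvd_of_forall_pow_eq_one (h.pow_eq_one hV)

theorem le_ker_of_isPGroup_map [Finite V] [Fact p.Prime] (h : IsIrreducibleAction φ)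
    (hV : IsPGroup p V) {P : Subgroup G} (hP : P.Normal) (hPp : IsPGroup p (P.map φ)) :
    P ≤ φ.ker := by
  have hmem : ∀ v, v ∈ FixedPoints.subgroup (P.map φ) V ↔ ∀ g ∈ P, φ g v = v := by
    simp [Subgroup.smul_def]
  obtain ⟨v, hv, hv1⟩ := hPp.exists_fixed_point_of_prime_dvd_card_of_fixed_point V
    (h.prime_dvd_card hV) (a := 1) (one_mem (FixedPoints.subgroup (P.map φ) V))
  have hinv : ∀ g, ∀ w ∈ FixedPoints.subgroup (P.map φ) V,
      φ g w ∈ FixedPoints.subgroup (P.map φ) V := by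
    intro g w hw
    rw [hmem] at hw ⊢
    intro q hq
    have hconj : φ (g⁻¹ * q * g) w = w := hw _ (by simpa using hP.conj_mem q hq g⁻¹)
    rwa [map_mul, map_mul, map_inv, MulAut.mul_apply, MulAut.mul_apply, MulAut.inv_apply,
      MulEquiv.symm_apply_eq] at hconj
  exact fun g hg => MonoidHom.mem_ker.2 <| MulEquiv.ext fun w =>
    (hmem w).1 (h.mem_of_invariant hinv hv hv1.symm w) g hg

theorem exists_forall_apply_eq_pow [Finite V] [Fact p.Prime] (h : IsIrreducibleAction φ)
    (hV : IsPGroup p V) {f : Monoid.End V} (hf : f ^ p = f)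
    (hcomm : ∀ g v, f (φ g v) = φ g (f v)) : ∃ k : ℕ, ∀ v, f v = v ^ k := by
  have := h.nontrivial
  have := h.isMulCommutative hV
  obtain ⟨k, v, hv1, hv⟩ := exists_apply_eq_pow_of_pow_prime_eq_self (h.pow_eq_one hV) hf
  refine ⟨k, h.mem_of_invariant (W := MonoidHom.eqLocus f (powMonoidHom k))
    (fun g w (hw : f w = w ^ k) => ?_) hv hv1⟩
  change f (φ g w) = φ g w ^ k
  rw [hcomm, hw, map_pow]

theorem isCyclic_of_forall_apply_eq_pow (h : IsIrreducibleAction φ)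
    (hφ : ∀ g, ∃ k : ℕ, ∀ v, φ g v = v ^ k) : IsCyclic V := by
  have := h.nontrivial
  obtain ⟨v, hv⟩ := exists_ne (1 : V)
  refine ⟨v, h.mem_of_invariant (fun g w hw => ?_) (Subgroup.mem_zpowers v) hv⟩
  obtain ⟨k, hk⟩ := hφ g
  exact hk w ▸ pow_mem hw k

end IsIrreducibleAction

theorem mulAut_pow_card_sub_one_eq_one [IsCyclic V] [Fact p.Prime] (hV : Nat.card V = p)
    (f : MulAut V) : f ^ (p - 1) = 1 := by
  subst hV
  apply (IsCyclic.mulAutMulEquiv V).injective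
  rw [map_pow, map_one, ZMod.units_pow_card_sub_one_eq_one]

theorem commute_mulAut_of_isCyclic [IsCyclic V] (f g : MulAut V) : Commute f g :=
  (Commute.all (IsCyclic.mulAutMulEquiv V f) _).of_map (IsCyclic.mulAutMulEquiv V).injective

theorem IsIrreducibleAction.isCyclic_iff [Finite V] [Fact p.Prime] (h : IsIrreducibleAction φ)
    (hV : IsPGroup p V) :
    IsCyclic V ↔ (∀ x y : G, ⁅x, y⁆ ∈ φ.ker) ∧ ∀ x, x ^ (p - 1) ∈ φ.ker := by
  simp only [MonoidHom.mem_ker, map_commutatorElement, commutatorElement_eq_one_iff_commute,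
    map_pow]
  constructor
  · intro
    exact ⟨fun x y => commute_mulAut_of_isCyclic _ _,
      fun x => mulAut_pow_card_sub_one_eq_one (h.card_eq_prime hV) _⟩
  · rintro ⟨hcomm, hpow⟩
    refine h.isCyclic_of_forall_apply_eq_pow fun g =>
      h.exists_forall_apply_eq_pow hV (f := MulDistribMulAction.toMonoidEnd _ V (φ g)) ?_
        fun x v => congr($(hcomm g x) v)
    rw [← map_pow, ← pow_sub_one_mul (Fact.out : p.Prime).ne_zero, hpow, one_mul]

end Irreducible

section ChiefFactorAction

variable {G : Type*} [Group G]

/-- The conjugation action of `G` on the factor `L/K`, encoded as the image of `L` in `G ⧸ K`;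
its kernel is the centraliser `C_G(L/K)`. -/
def conjFactor (K L : Subgroup G) [K.Normal] [L.Normal] : G →* MulAut (L.map (mk' K)) :=
  MulAut.conjNormal.comp (mk' K)

theorem mem_ker_conjFactor {K L : Subgroup G} [K.Normal] [L.Normal] {g : G} :
    g ∈ (conjFactor K L).ker ↔ ∀ x ∈ L, ⁅g, x⁆ ∈ K := by
  have hcomm : ∀ x, ⁅g, x⁆ ∈ K ↔ mk' K g * mk' K x * (mk' K g)⁻¹ = mk' K x := fun x => by
    rw [← QuotientGroup.eq_one_iff, ← mk'_apply, map_commutatorElement,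
      commutatorElement_eq_one_iff_mul_comm, mul_inv_eq_iff_eq_mul]
  simp only [hcomm, MonoidHom.mem_ker, MulEquiv.ext_iff, Subtype.forall, Subtype.ext_iff]
  exact ⟨fun h x hx => h _ ⟨x, hx, rfl⟩, by rintro h _ ⟨x, hx, rfl⟩; exact h x hx⟩

theorem IsChiefFactor.isIrreducibleAction {K L : Subgroup G} [K.Normal] [L.Normal]
    (h : IsChiefFactor G K L) : IsIrreducibleAction (conjFactor K L) := by
  refine ⟨?_, fun W hW => ?_⟩
  · rw [Subgroup.nontrivial_iff_ne_bot, Ne, Subgroup.map_eq_bot_iff, ker_mk']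
    exact h.2.2.1.not_ge
  · have hinj : Function.Injective (L.map (mk' K)).subtype := Subgroup.subtype_injective _
    have hnormal : (W.map (L.map (mk' K)).subtype).Normal := by
      refine ⟨?_⟩
      rintro _ ⟨w, hw, rfl⟩ ⟨g⟩
      exact ⟨_, hW g w hw, rfl⟩
    obtain ⟨M, hM, hKM, hMW⟩ : ∃ M : Subgroup G, M.Normal ∧ K ≤ M ∧
        M.map (mk' K) = W.map (L.map (mk' K)).subtype :=
      ⟨_, hnormal.comap (mk' K), le_comap_mk' K _,
        Subgroup.map_comap_eq_self_of_surjective (mk'_surjective K) _⟩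
    have hML : M ≤ L := by
      have hle : M.map (mk' K) ≤ L.map (mk' K) := hMW ▸ Subgroup.map_subtype_le W
      rwa [Subgroup.map_le_iff_le_comap, comap_map_mk', sup_eq_right.2 h.2.2.1.le] at hle
    refine (h.2.2.2 M hM hKM hML).imp (fun hMK => ?_) (fun hMeq => ?_)
    · rw [← Subgroup.map_eq_bot_iff_of_injective W hinj, ← hMW, hMK, map_mk'_self]
    · apply Subgroup.map_injective hinj
      rw [← hMW, hMeq, ← MonoidHom.range_eq_map, Subgroup.range_subtype]

theorem IsChiefFactor.cyclicFactor_iff {K L : Subgroup G} [K.Normal] [L.Normal] [Finite L] {p : ℕ}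
    [Fact p.Prime] (h : IsChiefFactor G K L) (hL : IsPGroup p L) :
    CyclicFactor K L ↔ (∀ x y : G, ⁅x, y⁆ ∈ (conjFactor K L).ker) ∧
      ∀ x : G, x ^ (p - 1) ∈ (conjFactor K L).ker :=
  have : Finite (L.map (mk' K)) := (L : Set G).toFinite.image (mk' K)
  cyclicFactor_iff_isCyclic.trans (h.isIrreducibleAction.isCyclic_iff (hL.map (mk' K)))

theorem IsChiefFactor.le_ker_conjFactor {K L P : Subgroup G} [K.Normal] [L.Normal] [Finite L]
    {p : ℕ} [Fact p.Prime] (h : IsChiefFactor G K L) (hL : IsPGroup p L) (hP : P.Normal)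
    (hpow : ∀ g ∈ P, ∃ n : ℕ, g ^ p ^ n ∈ (conjFactor K L).ker) : P ≤ (conjFactor K L).ker := by
  have : Finite (L.map (mk' K)) := (L : Set G).toFinite.image (mk' K)
  refine h.isIrreducibleAction.le_ker_of_isPGroup_map (hL.map (mk' K)) hP ?_
  rintro ⟨_, g, hg, rfl⟩
  obtain ⟨n, hn⟩ := hpow g hg
  exact ⟨n, Subtype.ext ((map_pow _ _ _).symm.trans hn)⟩

/-- The intersection of the centralisers `C_G(L/K)` of all chief factors `L/K` of `G` below `E`.
It is the candidate for the subgroup `P` when all these chief factors are cyclic. -/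
def chiefCentralizer (E : Subgroup G) : Subgroup G :=
  ⨅ (K : Subgroup G) (L : Subgroup G) (_ : K.Normal) (_ : L.Normal) (_ : IsChiefFactor G K L)
    (_ : L ≤ E), (conjFactor K L).ker

theorem mem_chiefCentralizer_iff {E : Subgroup G} {g : G} :
    g ∈ chiefCentralizer E ↔ ∀ (K L : Subgroup G) [K.Normal] [L.Normal],
      IsChiefFactor G K L → L ≤ E → g ∈ (conjFactor K L).ker := by
  simp only [chiefCentralizer, Subgroup.mem_iInf]

instance chiefCentralizer_normal (E : Subgroup G) : (chiefCentralizer E).Normal := by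
  unfold chiefCentralizer
  iterate 6 refine Subgroup.normal_iInf_normal fun _ => ?_
  infer_instance

theorem chiefCentralizer_anti : Antitone (chiefCentralizer (G := G)) := fun _ _ hMN _ hg =>
  mem_chiefCentralizer_iff.2 fun K L _ _ h hL => mem_chiefCentralizer_iff.1 hg K L h (hL.trans hMN)

theorem centralizer_le_ker_conjFactor {K L : Subgroup G} [K.Normal] [L.Normal] :
    Subgroup.centralizer (L : Set G) ≤ (conjFactor K L).ker := fun g hg =>
  mem_ker_conjFactor.2 fun x hx => by
    rw [commutatorElement_eq_one_iff_mul_comm.2 (Subgroup.mem_centralizer_iff.1 hg x hx).symm]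
    exact K.one_mem

theorem commutatorElement_pow_left {g x : G} (h : Commute g ⁅g, x⁆) (n : ℕ) :
    ⁅g ^ n, x⁆ = ⁅g, x⁆ ^ n := by
  have hconj : ∀ m : ℕ, ⁅g ^ m, x⁆ = g ^ m * (x * g⁻¹ * x⁻¹) ^ m := fun m => by
    rw [conj_pow, inv_pow, commutatorElement_def]
    group
  have hcomm : Commute g (x * g⁻¹ * x⁻¹) := by
    have : x * g⁻¹ * x⁻¹ = g⁻¹ * ⁅g, x⁆ := by rw [commutatorElement_def]; group
    exact this ▸ (Commute.refl g).inv_right.mul_right h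
  have hone : ⁅g, x⁆ = g * (x * g⁻¹ * x⁻¹) := by simpa only [pow_one] using hconj 1
  rw [hconj, ← hcomm.mul_pow, hone]

theorem exists_pow_mem_centralizer_of_commutatorElement_mem {K N : Subgroup G} [Finite K]
    {p : ℕ} [Fact p.Prime] (hK : IsPGroup p K) {g : G} (hgK : g ∈ Subgroup.centralizer (K : Set G))
    (hgN : ∀ x ∈ N, ⁅g, x⁆ ∈ K) : ∃ n : ℕ, g ^ p ^ n ∈ Subgroup.centralizer (N : Set G) := by
  obtain ⟨n, hn⟩ := IsPGroup.iff_card.1 hK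
  refine ⟨n, Subgroup.mem_centralizer_iff_commutator_eq_one'.2 fun x hx => ?_⟩
  have hcomm : Commute g ⁅g, x⁆ := (Subgroup.mem_centralizer_iff.1 hgK _ (hgN x hx)).symm
  rw [commutatorElement_pow_left hcomm, ← hn]
  exact congr(($(pow_card_eq_one' (x := (⟨_, hgN x hx⟩ : K))) : G))

theorem exists_pow_mem_centralizer_of_mem_chiefCentralizer {p : ℕ} [Fact p.Prime]
    (N : Subgroup G) [Finite N] (hN : N.Normal) (hNp : IsPGroup p N) {g : G}
    (hg : g ∈ chiefCentralizer N) :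
    ∃ n : ℕ, g ^ p ^ n ∈ Subgroup.centralizer (N : Set G) := by
  induction hcard : Nat.card N using Nat.strong_induction_on generalizing N with
  | _ c ih =>
    subst hcard
    rcases eq_or_ne N ⊥ with rfl | hbot
    · exact ⟨0, by simp [Subgroup.mem_centralizer_iff]⟩
    obtain ⟨K, hK⟩ := exists_isChiefFactor hN hbot
    have hKN : K < N := hK.2.2.1
    have := hK.1
    have : Finite K := Finite.Set.subset (N : Set G) hKN.le
    have hKp : IsPGroup p K := hNp.to_le hKN.le
    obtain ⟨m, hm⟩ := ih _ (Set.Finite.card_lt_card (N : Set G).toFinite hKN) K hK.1 hKp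
      (chiefCentralizer_anti hKN.le hg) rfl
    have hfactor : g ^ p ^ m ∈ (conjFactor K N).ker :=
      pow_mem (mem_chiefCentralizer_iff.1 hg K N hK le_rfl) _
    obtain ⟨n, hn⟩ := exists_pow_mem_centralizer_of_commutatorElement_mem hKp hm
      (mem_ker_conjFactor.1 hfactor)
    exact ⟨m + n, by rwa [pow_add, pow_mul]⟩

end ChiefFactorAction

theorem stmt9_general {G : Type*} [Group G] (p : ℕ) (hp : p.Prime) (E : Subgroup G) [Finite E]
    (hE : E.Normal) (hEp : IsPGroup p E) :
    E ≤ UHypercentre G ↔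
      ∃ P : Subgroup G, P.Normal ∧ Subgroup.centralizer (E : Set G) ≤ P ∧
        (∀ g ∈ P, ∃ n : ℕ, g ^ p ^ n ∈ Subgroup.centralizer (E : Set G)) ∧
        (∀ x y : G, x * y * x⁻¹ * y⁻¹ ∈ P) ∧ (∀ x : G, x ^ (p - 1) ∈ P) := by
  have := Fact.mk hp
  have hfin {L : Subgroup G} (hL : L ≤ E) : Finite L := Finite.Set.subset (E : Set G) hL
  have hcent {K L : Subgroup G} [K.Normal] [L.Normal] (hL : L ≤ E) :
      Subgroup.centralizer (E : Set G) ≤ (conjFactor K L).ker :=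
    (Subgroup.centralizer_le hL).trans centralizer_le_ker_conjFactor
  rw [le_uHypercentre_iff hE]
  constructor
  · intro hcyc
    have hker (K L : Subgroup G) [K.Normal] [L.Normal] (h : IsChiefFactor G K L) (hL : L ≤ E) :=
      have := hfin hL
      (h.cyclicFactor_iff (hEp.to_le hL)).1 (hcyc K L h hL)
    exact ⟨chiefCentralizer E, inferInstance,
      fun g hg => mem_chiefCentralizer_iff.2 fun _ _ _ _ _ hL => hcent hL hg,
      fun g hg => exists_pow_mem_centralizer_of_mem_chiefCentralizer E hE hEp hg,
      fun x y => mem_chiefCentralizer_iff.2 fun K L _ _ h hL => (hker K L h hL).1 x y,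
      fun x => mem_chiefCentralizer_iff.2 fun K L _ _ h hL => (hker K L h hL).2 x⟩
  · rintro ⟨P, hP, -, hPE, hcomm, hpow⟩ K L h hL
    have := hfin hL
    have := h.1
    have := h.2.1
    have hLp : IsPGroup p L := hEp.to_le hL
    have hPker : P ≤ (conjFactor K L).ker :=
      h.le_ker_conjFactor hLp hP fun g hg => (hPE g hg).imp fun _ hn => hcent hL hn
    exact (h.cyclicFactor_iff hLp).2 ⟨fun x y => hPker (hcomm x y), fun x => hPker (hpow x)⟩

/-- Let `E` be a normal `p`-subgroup of a finite group `G` and `C = C_G(E)`.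
Then `E ≤ Z_𝔘(G)` iff `(G/C)^{𝔄(p-1)} ≤ O_p(G/C)`, i.e. iff there is a normal
subgroup `P` of `G` containing `C` with `P/C` a `p`-group and `G/P` abelian of
exponent dividing `p - 1`. -/
theorem stmt9 {G : Type*} [Group G] [Finite G] (p : ℕ) (hp : p.Prime)
    (E : Subgroup G) (hE : E.Normal) (hEp : IsPGroup p E) :
    E ≤ UHypercentre G ↔
      ∃ P : Subgroup G, P.Normal ∧ Subgroup.centralizer (E : Set G) ≤ P ∧
        (∀ g ∈ P, ∃ n : ℕ, g ^ p ^ n ∈ Subgroup.centralizer (E : Set G)) ∧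
        (∀ x y : G, x * y * x⁻¹ * y⁻¹ ∈ P) ∧ (∀ x : G, x ^ (p - 1) ∈ P) :=
  stmt9_general p hp E hE hEp
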